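/- Let r, l be positive integers, ε_S ∈ (0,1), ε_H > 0, α > 0, θ ∈ (0,1), κ_S ≥ 0, S_max > 0. Let f : ℝ^d → ℝ be twice differentiable at x ∈ ℝ^d and suppose ∇²f(x) = Σ_{i=1}^r λ_i·u_i·u_iᵀ where u₁, …, u_r are orthonormal vectors in ℝ^d and λ₁ ≥ … ≥ λ_r with λ_r < −ε_H. Let S ∈ ℝ^{l×d}, set w_i = S·u_i, and assume: (a) 1 − ε_S ≤ ‖w_r‖² ≤ 1 + ε_S and ⟨w_i, w_r⟩² ≤ 16·(1+ε_S)/l for all i ≠ r; (b) 1 − ε_S + 16·((r−1)/l)·((1+ε_S)/(1−ε_S))·(λ₁/λ_r) ≥ 0; (c) ‖S‖ ≤ S_max. Let ŝ ∈ ℝ^l with Sᵀŝ ≠ 0 satisfy: (d) m̂(ŝ) ≤ f(x); (e) for every y ∈ ℝ^l, ⟨y, S∇²f(x)Sᵀ y⟩ + (1/α)·[ ‖Sᵀŝ‖^{-1}·⟨S Sᵀŝ, y⟩² + ‖Sᵀŝ‖·‖Sᵀy‖² ] ≥ −κ_S·‖Sᵀŝ‖·‖y‖²; (f) f(x) − f(x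 + Sᵀŝ) ≥ θ·( q̂(0) − q̂(ŝ) ). Then, with m = 1 − ε_S + 16·((r−1)/l)·((1+ε_S)/(1−ε_S))·min{0, λ₁/λ_r}, one has f(x) − f(x + Sᵀŝ) ≥ ( θ·ε_H³·m³ / (3α) )·( 2·S_max²/α + κ_S )^{-3}. -/

import Mathlib

open scoped BigOperators NNReal
open MeasureTheory ProbabilityTheory

namespace RARC

noncomputable def enorm {n : ℕ} (v : Fin n → ℝ) : ℝ := Real.sqrt (∑ i, v i ^ 2)

noncomputable def opNorm {m n : ℕ} (S : Matrix (Fin m) (Fin n) ℝ) : ℝ :=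
  sSup {c : ℝ | ∃ v : Fin n → ℝ, enorm v = 1 ∧ c = enorm (S.mulVec v)}

noncomputable def grad {n : ℕ} (f : (Fin n → ℝ) → ℝ) (x : Fin n → ℝ) : Fin n → ℝ :=
  fun i => fderiv ℝ f x (Pi.single i 1)

noncomputable def hess {n : ℕ} (f : (Fin n → ℝ) → ℝ) (x : Fin n → ℝ) :
    Matrix (Fin n) (Fin n) ℝ :=
  Matrix.of fun i j =>
    fderiv ℝ (fun y => fderiv ℝ f y (Pi.single j 1)) x (Pi.single i 1)

noncomputable def qhat {d l : ℕ} (f : (Fin d → ℝ) → ℝ) (x : Fin d → ℝ)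
    (S : Matrix (Fin l) (Fin d) ℝ) (s : Fin l → ℝ) : ℝ :=
  f x + (∑ i, S.mulVec (grad f x) i * s i)
    + (1/2) * (∑ i, s i * (S * hess f x * S.transpose).mulVec s i)

noncomputable def mhat {d l : ℕ} (f : (Fin d → ℝ) → ℝ) (x : Fin d → ℝ)
    (S : Matrix (Fin l) (Fin d) ℝ) (α : ℝ) (s : Fin l → ℝ) : ℝ :=
  qhat f x S s + (1/(3*α)) * enorm (S.transpose.mulVec s) ^ 3

noncomputable def lambdaMin {n : ℕ} (A : Matrix (Fin n) (Fin n) ℝ) : ℝ :=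
  sInf {t : ℝ | ∃ v : Fin n → ℝ, enorm v = 1 ∧ t = ∑ i, v i * A.mulVec v i}

def LipschitzHessian {n : ℕ} (f : (Fin n → ℝ) → ℝ) (L : ℝ) : Prop :=
  ∀ x y : Fin n → ℝ, opNorm (hess f y - hess f x) ≤ L * enorm (y - x)

noncomputable def augM {d : ℕ} (f : (Fin d → ℝ) → ℝ) (x : Fin d → ℝ) :
    Matrix (Fin d) (Fin (d+1)) ℝ :=
  Matrix.of fun i j => Fin.cases (grad f x i) (fun j' => hess f x i j') j

noncomputable def gaussVec (l : ℕ) : Measure (Fin l → ℝ) :=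
  Measure.pi fun _ => gaussianReal 0 (l : ℝ≥0)⁻¹

noncomputable def scaledGaussian (l d : ℕ) : Measure (Fin l → Fin d → ℝ) :=
  Measure.pi fun _ : Fin l => Measure.pi fun _ : Fin d => gaussianReal 0 (l : ℝ≥0)⁻¹


open Matrix in
lemma enorm_sq {n : ℕ} (v : Fin n → ℝ) : enorm v ^ 2 = v ⬝ᵥ v := by
  unfold enorm
  rw [Real.sq_sqrt (Finset.sum_nonneg fun i _ => sq_nonneg _)]
  simp [dotProduct, sq]

lemma enorm_nn {n : ℕ} (v : Fin n → ℝ) : 0 ≤ enorm v := Real.sqrt_nonneg _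

open Matrix in
lemma cs {n : ℕ} (v w : Fin n → ℝ) : (v ⬝ᵥ w) ^ 2 ≤ enorm v ^ 2 * enorm w ^ 2 := by
  have := Finset.sum_mul_sq_le_sq_mul_sq Finset.univ v w
  rw [enorm_sq, enorm_sq]
  simpa [dotProduct, sq] using this

lemma enorm_pos {n : ℕ} {v : Fin n → ℝ} (h : v ≠ 0) : 0 < enorm v := by
  rcases (enorm_nn v).lt_or_eq with h1 | h1
  · exact h1
  · exfalso
    apply h
    have := enorm_sq v
    rw [← h1] at this
    exact dotProduct_self_eq_zero.1 (by linarith)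

lemma enorm_smul {n : ℕ} (c : ℝ) (v : Fin n → ℝ) : enorm (c • v) = |c| * enorm v := by
  rw [← abs_of_nonneg (enorm_nn (c • v)), ← abs_of_nonneg (enorm_nn v), ← abs_mul, ← sq_eq_sq_iff_abs_eq_abs, mul_pow,
    enorm_sq, enorm_sq]
  simp [sq, mul_assoc]

lemma opNorm_bdd {m n : ℕ} (S : Matrix (Fin m) (Fin n) ℝ) :
    BddAbove {c : ℝ | ∃ v : Fin n → ℝ, enorm v = 1 ∧ c = enorm (S.mulVec v)} := by
  refine ⟨Real.sqrt (∑ i, enorm (S i) ^ 2), ?_⟩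
  rintro c ⟨v, hv, rfl⟩
  apply Real.sqrt_le_sqrt
  apply Finset.sum_le_sum
  intro i _
  have := cs (S i) v
  rw [hv] at this
  simpa [Matrix.mulVec] using this

lemma mulVec_le {m n : ℕ} (S : Matrix (Fin m) (Fin n) ℝ) (v : Fin n → ℝ) :
    enorm (S.mulVec v) ≤ opNorm S * enorm v := by
  by_cases h : v = 0
  · subst h
    simp [enorm]
  have hp := enorm_pos h
  have h1 : enorm (S.mulVec ((enorm v)⁻¹ • v)) ≤ opNorm S := by
    apply le_csSup (opNorm_bdd S)
    refine ⟨_, ?_, rfl⟩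
    rw [enorm_smul, abs_of_pos (inv_pos.2 hp), inv_mul_cancel₀ hp.ne']
  rw [Matrix.mulVec_smul, enorm_smul, abs_of_pos (inv_pos.2 hp)] at h1
  rw [inv_mul_le_iff₀ hp] at h1
  linarith

lemma transpose_le {m n : ℕ} (S : Matrix (Fin m) (Fin n) ℝ) (K : ℝ) (hK : opNorm S ≤ K)
    (hK0 : 0 < K) (y : Fin m → ℝ) :
    enorm (S.transpose.mulVec y) ^ 2 ≤ K ^ 2 * enorm y ^ 2 := by
  set z := S.transpose.mulVec y with hz
  have h1 : enorm z ^ 2 = dotProduct (S.mulVec z) y := by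
    rw [enorm_sq]
    nth_rw 2 [hz]
    rw [Matrix.mulVec_transpose, dotProduct_comm, ← Matrix.dotProduct_mulVec, dotProduct_comm]
  have h2 := cs (S.mulVec z) y
  have h3 : enorm (S.mulVec z) ^ 2 ≤ K ^ 2 * enorm z ^ 2 := by
    rw [← mul_pow]
    apply pow_le_pow_left₀ (enorm_nn _)
    exact (mulVec_le S z).trans (mul_le_mul_of_nonneg_right hK (enorm_nn _))
  rw [← h1] at h2
  by_cases h0 : enorm z ^ 2 = 0
  · rw [h0]; positivity
  have h0' : 0 < enorm z ^ 2 := lt_of_le_of_ne (sq_nonneg _) (Ne.symm h0)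
  have h4 := h2.trans (mul_le_mul_of_nonneg_right h3 (sq_nonneg (enorm y)))
  nlinarith

lemma adj {m n : ℕ} (S : Matrix (Fin m) (Fin n) ℝ) (v : Fin n → ℝ) (y : Fin m → ℝ) :
    dotProduct v (S.transpose.mulVec y) = dotProduct (S.mulVec v) y := by
  rw [Matrix.mulVec_transpose, dotProduct_comm, ← Matrix.dotProduct_mulVec, dotProduct_comm]

lemma quad {d l n : ℕ} (S : Matrix (Fin l) (Fin d) ℝ) (lam : Fin n → ℝ)
    (u : Fin n → (Fin d → ℝ)) (y : Fin l → ℝ) :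
    dotProduct y ((S * (∑ i, lam i • Matrix.vecMulVec (u i) (u i)) * S.transpose).mulVec y)
      = ∑ i, lam i * (dotProduct (S.mulVec (u i)) y) ^ 2 := by
  rw [← Matrix.mulVec_mulVec, ← Matrix.mulVec_mulVec, dotProduct_comm, ← adj, dotProduct_comm,
    Matrix.sum_mulVec, dotProduct_sum]
  refine Finset.sum_congr rfl fun i _ => ?_
  rw [Matrix.smul_mulVec, Matrix.vecMulVec_mulVec, dotProduct_smul, ← adj]
  rw [dotProduct_comm]
  simp [sq, adj, Matrix.mulVec_smul]

theorem stmt18 {d : ℕ} (n l : ℕ) (hl : 0 < l) (ε_S ε_H α θ κ_S S_max : ℝ)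
    (hεS : ε_S ∈ Set.Ioo (0:ℝ) 1) (hεH : 0 < ε_H) (hα : 0 < α)
    (hθ : θ ∈ Set.Ioo (0:ℝ) 1) (hκ : 0 ≤ κ_S) (hSmax : 0 < S_max)
    (f : (Fin d → ℝ) → ℝ) (x : Fin d → ℝ)
    (hf1 : DifferentiableAt ℝ f x) (hf2 : DifferentiableAt ℝ (fderiv ℝ f) x)
    (lam : Fin (n+1) → ℝ) (hlam : Antitone lam) (hlast : lam (Fin.last n) < -ε_H)
    (u : Fin (n+1) → (Fin d → ℝ))
    (hortho : ∀ i j, (∑ k, u i k * u j k) = if i = j then (1:ℝ) else 0)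
    (hhess : hess f x = ∑ i, lam i • Matrix.vecMulVec (u i) (u i))
    (S : Matrix (Fin l) (Fin d) ℝ)
    (hw1 : 1 - ε_S ≤ enorm (S.mulVec (u (Fin.last n))) ^ 2)
    (hw2 : enorm (S.mulVec (u (Fin.last n))) ^ 2 ≤ 1 + ε_S)
    (hw3 : ∀ i, i ≠ Fin.last n →
      (∑ j, S.mulVec (u i) j * S.mulVec (u (Fin.last n)) j) ^ 2 ≤ 16 * (1 + ε_S) / l)
    (hb : 1 - ε_S + 16 * ((n:ℝ)/l) * ((1 + ε_S)/(1 - ε_S))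
            * (lam 0 / lam (Fin.last n)) ≥ 0)
    (hcS : opNorm S ≤ S_max)
    (sh : Fin l → ℝ) (hs : S.transpose.mulVec sh ≠ 0)
    (hd : mhat f x S α sh ≤ f x)
    (he : ∀ y : Fin l → ℝ,
      (∑ i, y i * (S * hess f x * S.transpose).mulVec y i)
        + (1/α) * ((enorm (S.transpose.mulVec sh))⁻¹
              * (∑ i, (S * S.transpose).mulVec sh i * y i) ^ 2
            + enorm (S.transpose.mulVec sh) * enorm (S.transpose.mulVec y) ^ 2)
        ≥ -κ_S * enorm (S.transpose.mulVec sh) * enorm y ^ 2)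
    (hf' : f x - f (x + S.transpose.mulVec sh) ≥ θ * (qhat f x S 0 - qhat f x S sh)) :
    f x - f (x + S.transpose.mulVec sh)
      ≥ (θ * ε_H ^ 3
          * (1 - ε_S + 16 * ((n:ℝ)/l) * ((1 + ε_S)/(1 - ε_S))
              * min 0 (lam 0 / lam (Fin.last n))) ^ 3 / (3 * α))
        * ((2 * S_max ^ 2 / α + κ_S) ^ 3)⁻¹ := by
  obtain ⟨hε0, hε1⟩ := hεS
  set r := Fin.last n with hr
  set w := S.mulVec (u r) with hw
  set N := enorm (S.transpose.mulVec sh) with hN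
  have hNpos : 0 < N := enorm_pos hs
  set W := enorm w ^ 2 with hW
  have hWpos : 0 < W := by linarith
  have hlr : lam r < 0 := by linarith
  have hlR : (0:ℝ) < l := by exact_mod_cast hl
  set m := 1 - ε_S + 16 * ((n:ℝ)/l) * ((1 + ε_S)/(1 - ε_S)) * min 0 (lam 0 / lam r) with hm
  have hm0 : 0 ≤ m := by
    rcases le_total 0 (lam 0 / lam r) with h | h
    · rw [hm, min_eq_left h]; linarith
    · rw [hm, min_eq_right h]; linarith
  set P := max 0 (lam 0) with hP
  have hP0 : 0 ≤ P := le_max_left _ _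
  have hPm : lam r * min 0 (lam 0 / lam r) = P := by
    rcases le_total 0 (lam 0) with h | h
    · rw [hP, max_eq_right h, min_eq_right (div_nonpos_of_nonneg_of_nonpos h hlr.le),
        mul_div_cancel₀ _ hlr.ne]
    · rw [hP, max_eq_left h, min_eq_left (div_nonneg_of_nonpos h hlr.le), mul_zero]
  -- curvature along w
  have hq : (∑ i, w i * (S * hess f x * S.transpose).mulVec w i) ≤ -ε_H * m * W := by
    have h1 : (∑ i, w i * (S * hess f x * S.transpose).mulVec w i)
        = ∑ i, lam i * (dotProduct (S.mulVec (u i)) w) ^ 2 := by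
      rw [hhess]; exact quad S lam u w
    rw [h1, Fin.sum_univ_castSucc]
    have h2 : ∑ i : Fin n, lam i.castSucc * (dotProduct (S.mulVec (u i.castSucc)) w) ^ 2
        ≤ ∑ _i : Fin n, P * (16 * (1 + ε_S) / l) := by
      refine Finset.sum_le_sum fun i _ => ?_
      have h3 := hw3 i.castSucc (Fin.castSucc_lt_last i).ne
      have h4 : lam i.castSucc ≤ P := (hlam (Fin.zero_le _)).trans (le_max_right _ _)
      exact mul_le_mul h4 h3 (sq_nonneg _) hP0
    have h5 : dotProduct (S.mulVec (u (Fin.last n))) w = W := by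
      rw [hW, enorm_sq]
    rw [h5]
    simp only [Finset.sum_const, Finset.card_univ, Fintype.card_fin, nsmul_eq_mul] at h2
    have h6 : lam r * m = lam r * (1 - ε_S) + (n * (P * (16 * (1 + ε_S) / l))) / (1 - ε_S) := by
      rw [← hPm, hm]
      have : 1 - ε_S ≠ 0 := by linarith
      field_simp
    set Q := (n * (P * (16 * (1 + ε_S) / l))) with hQ
    have hQ0 : 0 ≤ Q := by positivity
    have h7 : Q ≤ Q / (1 - ε_S) * W := by
      rw [div_mul_eq_mul_div, le_div_iff₀ (by linarith)]
      exact mul_le_mul_of_nonneg_left hw1 hQ0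
    have h8 : lam r * W ^ 2 ≤ lam r * (1 - ε_S) * W := by
      have : lam r * W ≤ lam r * (1 - ε_S) := mul_le_mul_of_nonpos_left hw1 hlr.le
      nlinarith
    have h9 : lam r * m * W ≤ -ε_H * m * W := by
      apply mul_le_mul_of_nonneg_right _ hWpos.le
      exact mul_le_mul_of_nonneg_right hlast.le hm0
    rw [h6] at h9
    linarith
  have hT := transpose_le S S_max hcS hSmax w
  set T := enorm (S.transpose.mulVec w) ^ 2 with hTdef
  have hcross : (∑ i, (S * S.transpose).mulVec sh i * w i) ^ 2 ≤ N ^ 2 * T := by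
    have h1 : (∑ i, (S * S.transpose).mulVec sh i * w i)
        = dotProduct (S.transpose.mulVec sh) (S.transpose.mulVec w) := by
      rw [adj, Matrix.mulVec_mulVec]; rfl
    rw [h1]
    exact cs _ _
  have hew := he w
  have hc2 : N⁻¹ * (∑ i, (S * S.transpose).mulVec sh i * w i) ^ 2 ≤ N * T := by
    rw [inv_mul_le_iff₀ hNpos]; linarith
  have hc3 : (1/α) * (N⁻¹ * (∑ i, (S * S.transpose).mulVec sh i * w i) ^ 2 + N * T)
      ≤ (1/α) * (2 * N * (S_max ^ 2 * W)) := by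
    apply mul_le_mul_of_nonneg_left _ (by positivity)
    have := mul_le_mul_of_nonneg_left hT hNpos.le
    linarith
  set D := 2 * S_max ^ 2 / α + κ_S with hD
  have hDpos : 0 < D := by positivity
  have hkey : ε_H * m ≤ N * D := by
    have h1 : ε_H * m * W ≤ N * D * W := by
      have : N * D * W = (1/α) * (2 * N * (S_max ^ 2 * W)) + κ_S * N * W := by
        rw [hD]; field_simp
      rw [this]
      linarith
    exact le_of_mul_le_mul_right h1 hWpos
  have hN3 : (ε_H * m) ^ 3 * (D ^ 3)⁻¹ ≤ N ^ 3 := by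
    rw [← div_eq_mul_inv, div_le_iff₀ (by positivity), ← mul_pow]
    exact pow_le_pow_left₀ (by positivity) hkey 3
  have hq0 : qhat f x S 0 = f x := by simp [qhat]
  have hdec : N ^ 3 / (3 * α) ≤ qhat f x S 0 - qhat f x S sh := by
    rw [hq0]
    unfold mhat at hd
    have : N ^ 3 / (3 * α) = (1/(3*α)) * N ^ 3 := by ring
    rw [this]
    linarith
  have hfin : θ * ε_H ^ 3 * m ^ 3 / (3 * α) * (D ^ 3)⁻¹ ≤ θ * (N ^ 3 / (3 * α)) := by
    have : θ * ε_H ^ 3 * m ^ 3 / (3 * α) * (D ^ 3)⁻¹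
        = θ * (((ε_H * m) ^ 3 * (D ^ 3)⁻¹) / (3 * α)) := by ring
    rw [this]
    have := hθ.1
    gcongr
  have := mul_le_mul_of_nonneg_left hdec hθ.1.le
  linarith

end RARC
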